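/- arXiv:2504.13823 — 8 statements merged into one kernel-verified Lean document; each statement's English description precedes it below -/
import Mathlib

section
/- Let γ be a stationary distribution of P (γ ≥ 0, Σ_s γ(s) = 1, and Σ_s γ(s)·P(s,s') = γ(s') for all s'). Define ν : S × ℕ → ℝ by ν(s,η) = γ(s)·ρ·(1-ρ)^η. Then ν is a stationary probability distribution of the belief Markov chain: ν ≥ 0, Σ_{(s,η)} ν(s,η) = 1, and for every q ∈ S × ℕ, ν(q) = Σ_{p ∈ S×ℕ} ν(p)·K(p,q). -/
open scoped BigOperators

/-- Transition kernel of the belief Markov chain of an intermittently observable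
Markov chain with transition matrix `P` and observation probability `ρ`:
`K((s,η),(s,η+1)) = 1-ρ`, `K((s,η),(j,0)) = ρ·(P^(η+1))(s,j)`, and `0` otherwise. -/
noncomputable def beliefK {S : Type*} [Fintype S] [DecidableEq S]
    (P : Matrix S S ℝ) (ρ : ℝ) : S × ℕ → S × ℕ → ℝ :=
  fun p q =>
    if q.2 = p.2 + 1 ∧ q.1 = p.1 then 1 - ρ
    else if q.2 = 0 then ρ * (P ^ (p.2 + 1)) p.1 q.1
    else 0

lemma hasSum_aux {S : Type*} [Fintype S] (f : S × ℕ → ℝ) (hf : ∀ p, 0 ≤ f p)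
    (g : ℕ → ℝ) (hg : ∀ n, ∑ s, f (s, n) = g n) (a : ℝ) (h : HasSum g a) : HasSum f a := by
  have hs : Summable (fun p : ℕ × S => f (p.2, p.1)) := by
    rw [summable_prod_of_nonneg (fun p => hf _)]
    refine ⟨fun n => (hasSum_fintype _).summable, ?_⟩
    simp only [tsum_fintype, hg]
    exact h.summable
  have h1 : HasSum (fun p : ℕ × S => f (p.2, p.1)) a := by
    have h2 := hs.hasSum.prod_fiberwise (fun n => hasSum_fintype _)
    simp only [hg] at h2
    have := h2.unique h
    rw [← this]
    exact hs.hasSum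
  exact (Equiv.prodComm ℕ S).hasSum_iff.mp h1

lemma pow_nonneg_aux {S : Type*} [Fintype S] [DecidableEq S] (P : Matrix S S ℝ)
    (hP : ∀ s s', 0 ≤ P s s') (n : ℕ) : ∀ s s', 0 ≤ (P ^ n) s s' := by
  induction n with
  | zero =>
    intro s s'
    rw [pow_zero, Matrix.one_apply]
    split_ifs <;> norm_num
  | succ n ih =>
    intro s s'
    rw [pow_succ, Matrix.mul_apply]
    exact Finset.sum_nonneg fun k _ => mul_nonneg (ih _ _) (hP _ _)

lemma stat_aux {S : Type*} [Fintype S] [DecidableEq S] (P : Matrix S S ℝ) (γ : S → ℝ)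
    (h : ∀ s', ∑ s, γ s * P s s' = γ s') (n : ℕ) (j : S) :
    ∑ s, γ s * (P ^ n) s j = γ j := by
  have h1 : Matrix.vecMul γ P = γ := funext h
  have h2 : Matrix.vecMul γ (P ^ n) = γ := by
    induction n with
    | zero => simp
    | succ n ih => rw [pow_succ, ← Matrix.vecMul_vecMul, ih, h1]
  exact congrFun h2 j

theorem stmt0 {S : Type*} [Fintype S] [DecidableEq S] [Nonempty S]
    (P : Matrix S S ℝ) (ρ : ℝ) (hρ0 : 0 < ρ) (hρ1 : ρ ≤ 1)
    (hPnn : ∀ s s', 0 ≤ P s s') (hProw : ∀ s, ∑ s', P s s' = 1)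
    (γ : S → ℝ) (hγnn : ∀ s, 0 ≤ γ s) (hγsum : ∑ s, γ s = 1)
    (hγstat : ∀ s', ∑ s, γ s * P s s' = γ s')
    (ν : S × ℕ → ℝ) (hν : ∀ s η, ν (s, η) = γ s * ρ * (1 - ρ) ^ η) :
    (∀ p, 0 ≤ ν p) ∧ (∑' p : S × ℕ, ν p = 1) ∧
      (∀ q : S × ℕ, ν q = ∑' p : S × ℕ, ν p * beliefK P ρ p q) := by
  have hr : 0 ≤ 1 - ρ := by linarith
  have hgeo : HasSum (fun n : ℕ => (1 - ρ) ^ n) ρ⁻¹ := by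
    have := hasSum_geometric_of_lt_one hr (by linarith)
    simpa using this
  have hnn : ∀ p, 0 ≤ ν p := by
    rintro ⟨s, n⟩
    rw [hν]
    exact mul_nonneg (mul_nonneg (hγnn s) hρ0.le) (pow_nonneg hr n)
  refine ⟨hnn, ?_, ?_⟩
  · refine (hasSum_aux ν hnn (fun n => ρ * (1 - ρ) ^ n) ?_ 1 ?_).tsum_eq
    · intro n
      simp only [hν]
      rw [← Finset.sum_mul, ← Finset.sum_mul, hγsum, one_mul]
    · have := hgeo.mul_left ρ
      rwa [mul_inv_cancel₀ hρ0.ne'] at this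
  · rintro ⟨j, m⟩
    symm
    cases m with
    | zero =>
      have hK : ∀ s n, ν (s, n) * beliefK P ρ (s, n) (j, 0)
          = (ρ * (1 - ρ) ^ n * ρ) * (γ s * (P ^ (n + 1)) s j) := by
        intro s n
        simp only [hν, beliefK]
        rw [if_neg (by simp), if_pos trivial]
        ring
      refine (hasSum_aux _ ?_ (fun n => (ρ * γ j * ρ) * (1 - ρ) ^ n) ?_ _ ?_).tsum_eq
      · rintro ⟨s, n⟩
        rw [hK]
        have := pow_nonneg_aux P hPnn (n + 1) s j
        have := hγnn s
        positivity
      · intro n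
        simp only [hK]
        rw [← Finset.mul_sum, stat_aux P γ hγstat]
        ring
      · have := hgeo.mul_left (ρ * γ j * ρ)
        rw [hν]
        have e : γ j * ρ * (1 - ρ) ^ 0 = ρ * γ j * ρ * ρ⁻¹ := by
          rw [mul_assoc _ ρ ρ⁻¹, mul_inv_cancel₀ hρ0.ne']
          ring
        rw [e]
        exact this
    | succ m =>
      rw [tsum_eq_single (j, m)]
      · simp only [hν, beliefK]
        simp
        ring
      · rintro ⟨s, n⟩ hne
        have : beliefK P ρ (s, n) (j, m + 1) = 0 := by
          simp only [beliefK]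
          rw [if_neg, if_neg (by simp)]
          rintro ⟨h1, h2⟩
          apply hne
          ext
          · exact h2.symm
          · simp at h1 ⊢
            omega
        rw [this, mul_zero]
end

section
/- Let x : S × ℕ → ℝ be nonnegative, summable, and stationary for the belief kernel K, i.e., x(q) = Σ_{p ∈ S×ℕ} x(p)·K(p,q) for every q ∈ S × ℕ. Then x(s,η) = (1-ρ)^η · x(s,0) for all s ∈ S and η ∈ ℕ. -/
open scoped BigOperators

theorem stmt1 {S : Type*} [Fintype S] [DecidableEq S] [Nonempty S]
    (P : Matrix S S ℝ) (ρ : ℝ) (hρ0 : 0 < ρ) (hρ1 : ρ ≤ 1)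
    (hPnn : ∀ s s', 0 ≤ P s s') (hProw : ∀ s, ∑ s', P s s' = 1)
    (x : S × ℕ → ℝ) (hxnn : ∀ p, 0 ≤ x p) (hxsum : Summable x)
    (hxstat : ∀ q : S × ℕ, x q = ∑' p : S × ℕ, x p * beliefK P ρ p q) :
    ∀ (s : S) (η : ℕ), x (s, η) = (1 - ρ) ^ η * x (s, 0) := by
  intro s η
  induction η with
  | zero => simp
  | succ n ih =>
    rw [hxstat (s, n + 1), tsum_eq_single (s, n)]
    · have hK : beliefK P ρ (s, n) (s, n + 1) = 1 - ρ := by simp [beliefK]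
      rw [hK, ih]
      ring
    · rintro ⟨t, m⟩ hne
      have hK : beliefK P ρ (t, m) (s, n + 1) = 0 := by
        unfold beliefK
        rw [if_neg, if_neg]
        · simp
        · rintro ⟨h1, h2⟩
          apply hne
          simp only at h1 h2
          rw [h2, Nat.succ_injective h1]
      rw [hK, mul_zero]
end

section
/- Let x : S × ℕ → ℝ be nonnegative and stationary for the belief kernel K (i.e., x(q) = Σ_{p} x(p)·K(p,q) for all q), summable with total mass Σ_{(s,η)} x(s,η) = 1. Then Σ_s x(s,0) = ρ, and the restriction x(·,0) is a left fixed vector of the resolvent matrix M: for every s' ∈ S, Σ_s x(s,0)·M(s,s') = x(s',0). -/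
open scoped BigOperators

/-- The resolvent matrix `M(s,s') = ρ·Σ_{η=0}^∞ (1-ρ)^η·(P^(η+1))(s,s')`. -/
noncomputable def resolventM {S : Type*} [Fintype S] [DecidableEq S]
    (P : Matrix S S ℝ) (ρ : ℝ) : S → S → ℝ :=
  fun s s' => ρ * ∑' η : ℕ, (1 - ρ) ^ η * (P ^ (η + 1)) s s'

theorem pow_entry_bounds {S : Type*} [Fintype S] [DecidableEq S]
    (P : Matrix S S ℝ)
    (hPnn : ∀ s s', 0 ≤ P s s') (hProw : ∀ s, ∑ s', P s s' = 1) (n : ℕ) :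
    (∀ s s', 0 ≤ (P ^ n) s s') ∧ (∀ s, ∑ s', (P ^ n) s s' = 1) := by
  induction n with
  | zero =>
    refine ⟨fun s s' => ?_, fun s => ?_⟩
    · rw [pow_zero, Matrix.one_apply]
      split_ifs <;> norm_num
    · simp [Matrix.one_apply]
  | succ n ih =>
    refine ⟨fun s s' => ?_, fun s => ?_⟩
    · rw [pow_succ, Matrix.mul_apply]
      exact Finset.sum_nonneg fun j _ => mul_nonneg (ih.1 _ _) (hPnn _ _)
    · simp only [pow_succ, Matrix.mul_apply]
      rw [Finset.sum_comm]
      simp only [← Finset.mul_sum, hProw, mul_one, ih.2]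

theorem stmt2 {S : Type*} [Fintype S] [DecidableEq S] [Nonempty S]
    (P : Matrix S S ℝ) (ρ : ℝ) (hρ0 : 0 < ρ) (hρ1 : ρ ≤ 1)
    (hPnn : ∀ s s', 0 ≤ P s s') (hProw : ∀ s, ∑ s', P s s' = 1)
    (x : S × ℕ → ℝ) (hxnn : ∀ p, 0 ≤ x p) (hxsum : Summable x)
    (hx1 : ∑' p : S × ℕ, x p = 1)
    (hxstat : ∀ q : S × ℕ, x q = ∑' p : S × ℕ, x p * beliefK P ρ p q) :
    (∑ s, x (s, 0) = ρ) ∧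
      (∀ s' : S, ∑ s, x (s, 0) * resolventM P ρ s s' = x (s', 0)) := by
  have hstep : ∀ s η, x (s, η + 1) = x (s, η) * (1 - ρ) := by
    intro s η
    rw [hxstat (s, η + 1), tsum_eq_single (s, η)]
    · simp [beliefK]
    · rintro ⟨t, m⟩ hne
      have h : ¬ (η + 1 = m + 1 ∧ s = t) := by
        rintro ⟨h1, h2⟩
        apply hne
        rw [h2, Nat.succ_injective h1]
      simp only [beliefK]
      rw [if_neg h, if_neg (Nat.succ_ne_zero η), mul_zero]
  have hgeo : ∀ s η, x (s, η) = x (s, 0) * (1 - ρ) ^ η := by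
    intro s η
    induction η with
    | zero => simp
    | succ n ih => rw [hstep, ih, pow_succ, mul_assoc]
  refine ⟨?_, fun s' => ?_⟩
  · rw [hxsum.tsum_prod, tsum_fintype] at hx1
    have h2 : ∑' η : ℕ, (1 - ρ) ^ η = ρ⁻¹ := by
      rw [tsum_geometric_of_lt_one (by linarith) (by linarith)]
      congr 1
      ring
    have h3 : ∀ s, ∑' η : ℕ, x (s, η) = x (s, 0) * ρ⁻¹ := by
      intro s
      rw [← h2, ← tsum_mul_left]
      exact tsum_congr fun η => hgeo s η
    have h4 : ∑ s, x (s, 0) * ρ⁻¹ = 1 := by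
      rw [← Finset.sum_congr rfl fun s _ => h3 s]
      exact hx1
    rw [← Finset.sum_mul] at h4
    field_simp at h4
    exact h4
  · have hK : ∀ p : S × ℕ, x p * beliefK P ρ p (s', 0)
        = x p * (ρ * (P ^ (p.2 + 1)) p.1 s') := by
      intro p
      simp [beliefK]
    have hle : ∀ n s, (P ^ n) s s' ≤ 1 := by
      intro n s
      have hb := pow_entry_bounds P hPnn hProw n
      rw [← hb.2 s]
      exact Finset.single_le_sum (f := fun j => (P ^ n) s j)
        (fun j _ => hb.1 s j) (Finset.mem_univ s')
    have hsum : Summable fun p : S × ℕ => x p * (ρ * (P ^ (p.2 + 1)) p.1 s') := by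
      refine Summable.of_nonneg_of_le (fun p => ?_) (fun p => ?_) hxsum
      · exact mul_nonneg (hxnn p) (mul_nonneg hρ0.le
          ((pow_entry_bounds P hPnn hProw _).1 _ _))
      · refine mul_le_of_le_one_right (hxnn p) ?_
        exact mul_le_one₀ hρ1 ((pow_entry_bounds P hPnn hProw _).1 _ _) (hle _ _)
    rw [hxstat (s', 0), tsum_congr hK, hsum.tsum_prod, tsum_fintype]
    refine Finset.sum_congr rfl fun s _ => ?_
    rw [resolventM, ← tsum_mul_left, ← tsum_mul_left]
    refine tsum_congr fun η => ?_
    rw [hgeo s η]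
    ring
end

section
/- For every n ≥ 1 and all i,j ∈ S, the n-step belief kernel satisfies K^n((i,0),(j,0)) ≥ (1-ρ)^{n-1} · ρ · (P^n)(i,j). -/
open scoped BigOperators

/-- `kIter K m` is the `(m+1)`-step kernel `K^(m+1)`; that is `kIter K 0 = K^1 = K`,
and `K^(m+1)(p,q) = Σ_r K^m(p,r)·K(r,q)`. -/
noncomputable def kIter {X : Type*} (K : X → X → ℝ) : ℕ → X → X → ℝ
  | 0 => K
  | n + 1 => fun p q => ∑' r : X, kIter K n p r * K r q

theorem powNonneg_aux {S : Type*} [Fintype S] [DecidableEq S] (P : Matrix S S ℝ)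
    (hPnn : ∀ s s', 0 ≤ P s s') : ∀ (n : ℕ) (s s' : S), 0 ≤ (P ^ n) s s' := by
  intro n
  induction n with
  | zero =>
    intro s s'
    rw [pow_zero, Matrix.one_apply]
    split_ifs <;> norm_num
  | succ n ih =>
    intro s s'
    rw [pow_succ, Matrix.mul_apply]
    exact Finset.sum_nonneg fun k _ => mul_nonneg (ih _ _) (hPnn _ _)

theorem beliefK_nonneg_aux {S : Type*} [Fintype S] [DecidableEq S] (P : Matrix S S ℝ)
    (ρ : ℝ) (hρ0 : 0 < ρ) (hρ1 : ρ ≤ 1) (hPnn : ∀ s s', 0 ≤ P s s') (p q : S × ℕ) :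
    0 ≤ beliefK P ρ p q := by
  unfold beliefK
  split_ifs
  · linarith
  · exact mul_nonneg hρ0.le (powNonneg_aux P hPnn _ _ _)
  · exact le_rfl

theorem kIter_nonneg_aux {X : Type*} (K : X → X → ℝ) (hK : ∀ p q, 0 ≤ K p q) :
    ∀ (n : ℕ) (p q : X), 0 ≤ kIter K n p q := by
  intro n
  induction n with
  | zero => exact hK
  | succ n ih =>
    intro p q
    exact tsum_nonneg fun r => mul_nonneg (ih p r) (hK r q)

theorem kIter_support_aux {S : Type*} [Fintype S] [DecidableEq S] (P : Matrix S S ℝ)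
    (ρ : ℝ) : ∀ (n : ℕ) (p q : S × ℕ), p.2 + n + 1 < q.2 →
      kIter (beliefK P ρ) n p q = 0 := by
  have hK : ∀ p q : S × ℕ, p.2 + 1 < q.2 → beliefK P ρ p q = 0 := by
    intro p q h
    unfold beliefK
    rw [if_neg (by omega), if_neg (by omega)]
  intro n
  induction n with
  | zero => exact fun p q h => hK p q (by omega)
  | succ n ih =>
    intro p q h
    have : ∀ r : S × ℕ, kIter (beliefK P ρ) n p r * beliefK P ρ r q = 0 := by
      intro r
      by_cases hr : p.2 + n + 1 < r.2
      · rw [ih p r hr, zero_mul]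
      · rw [hK r q (by omega), mul_zero]
    simp only [kIter, this, tsum_zero]

theorem kIter_term_le_aux {S : Type*} [Fintype S] [DecidableEq S] (P : Matrix S S ℝ)
    (ρ : ℝ) (hρ0 : 0 < ρ) (hρ1 : ρ ≤ 1) (hPnn : ∀ s s', 0 ≤ P s s') (n : ℕ)
    (p r q : S × ℕ) :
    kIter (beliefK P ρ) n p r * beliefK P ρ r q ≤ kIter (beliefK P ρ) (n + 1) p q := by
  have hK := beliefK_nonneg_aux P ρ hρ0 hρ1 hPnn
  have hs : Summable fun r => kIter (beliefK P ρ) n p r * beliefK P ρ r q := by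
    apply summable_of_ne_finset_zero
      (s := (Finset.univ : Finset S) ×ˢ Finset.range (p.2 + n + 2))
    intro b hb
    have hb' : p.2 + n + 1 < b.2 := by
      simp only [Finset.mem_product, Finset.mem_univ, true_and, Finset.mem_range] at hb
      omega
    rw [kIter_support_aux P ρ n p b hb', zero_mul]
  exact hs.le_tsum r fun b _ => mul_nonneg (kIter_nonneg_aux _ hK n p b) (hK b q)

theorem kIter_diag_aux {S : Type*} [Fintype S] [DecidableEq S] (P : Matrix S S ℝ)
    (ρ : ℝ) (hρ0 : 0 < ρ) (hρ1 : ρ ≤ 1) (hPnn : ∀ s s', 0 ≤ P s s') (i : S) :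
    ∀ n : ℕ, (1 - ρ) ^ (n + 1) ≤ kIter (beliefK P ρ) n (i, 0) (i, n + 1) := by
  intro n
  induction n with
  | zero => simp [kIter, beliefK]
  | succ n ih =>
    refine le_trans ?_ (kIter_term_le_aux P ρ hρ0 hρ1 hPnn n (i, 0) (i, n + 1) _)
    have : beliefK P ρ (i, n + 1) (i, n + 1 + 1) = 1 - ρ := by simp [beliefK]
    rw [this, pow_succ]
    exact mul_le_mul_of_nonneg_right ih (by linarith)

/-- For every n ≥ 1 (here n = m + 1, so that `kIter (beliefK P ρ) m` is the
n-step kernel K^n), the n-step belief kernel satisfies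
K^n((i,0),(j,0)) ≥ (1-ρ)^(n-1) · ρ · (P^n)(i,j). -/
theorem stmt5 {S : Type*} [Fintype S] [DecidableEq S] [Nonempty S]
    (P : Matrix S S ℝ) (ρ : ℝ) (hρ0 : 0 < ρ) (hρ1 : ρ ≤ 1)
    (hPnn : ∀ s s', 0 ≤ P s s') (hProw : ∀ s, ∑ s', P s s' = 1) :
    ∀ (m : ℕ) (i j : S),
      (1 - ρ) ^ m * ρ * (P ^ (m + 1)) i j ≤ kIter (beliefK P ρ) m (i, 0) (j, 0) := by
  intro m i j
  cases m with
  | zero => simp [kIter, beliefK]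
  | succ n =>
    refine le_trans ?_ (kIter_term_le_aux P ρ hρ0 hρ1 hPnn n (i, 0) (i, n + 1) _)
    have : beliefK P ρ (i, n + 1) (j, 0) = ρ * (P ^ (n + 1 + 1)) i j := by simp [beliefK]
    rw [this, mul_assoc]
    exact mul_le_mul_of_nonneg_right (kIter_diag_aux P ρ hρ0 hρ1 hPnn i n)
      (mul_nonneg hρ0.le (powNonneg_aux P hPnn _ _ _))
end

section
/- Assume P is irreducible (for all s,s' ∈ S there exists n ≥ 1 with (P^n)(s,s') > 0). Then every nonempty set C ⊆ S × ℕ that is closed for the belief kernel K contains all age-zero states: (j,0) ∈ C for every j ∈ S. -/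
open scoped BigOperators

/-- If `P` is irreducible, then every nonempty set `C ⊆ S × ℕ` that is closed
for the belief kernel `K` contains all age-zero states. -/
theorem stmt6 {S : Type*} [Fintype S] [DecidableEq S] [Nonempty S]
    (P : Matrix S S ℝ) (ρ : ℝ) (hρ0 : 0 < ρ) (hρ1 : ρ ≤ 1)
    (hPnn : ∀ s s', 0 ≤ P s s') (hProw : ∀ s, ∑ s', P s s' = 1)
    (hirr : ∀ s s' : S, ∃ n : ℕ, 1 ≤ n ∧ 0 < (P ^ n) s s')
    (C : Set (S × ℕ)) (hCne : C.Nonempty)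
    (hCclosed : ∀ p ∈ C, ∀ q : S × ℕ, 0 < beliefK P ρ p q → q ∈ C) :
    ∀ j : S, (j, 0) ∈ C := by
  have hstep : ∀ (s : S) (η : ℕ) (j : S), (s, η) ∈ C → 0 < (P ^ (η + 1)) s j → (j, 0) ∈ C := by
    intro s η j hs hpos
    apply hCclosed _ hs
    have h : beliefK P ρ (s, η) (j, 0) = ρ * (P ^ (η + 1)) s j := by
      simp [beliefK]
    rw [h]
    exact mul_pos hρ0 hpos
  have hrow : ∀ (m : ℕ) (s : S), ∑ j, (P ^ m) s j = 1 := by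
    intro m
    induction m with
    | zero => intro s; simp [Matrix.one_apply]
    | succ m ih =>
      intro s
      simp only [pow_succ, Matrix.mul_apply]
      rw [Finset.sum_comm]
      simp only [← Finset.mul_sum, hProw, mul_one, ih]
  have hex : ∀ (m : ℕ) (s : S), ∃ j, 0 < (P ^ m) s j := by
    intro m s
    by_contra! hc
    have h := Finset.sum_nonpos (s := Finset.univ) (fun j _ => hc j)
    rw [hrow] at h
    linarith
  obtain ⟨⟨s, η⟩, hs⟩ := hCne
  obtain ⟨i, hi⟩ := hex (η + 1) s
  have hi0 := hstep s η i hs hi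
  have hreach : ∀ (n : ℕ) (j : S), 0 < (P ^ n) i j → (j, 0) ∈ C := by
    intro n
    induction n with
    | zero =>
      intro j hj
      by_cases hij : i = j
      · exact hij ▸ hi0
      · simp [Matrix.one_apply, hij] at hj
    | succ n ih =>
      intro j hj
      rw [pow_succ, Matrix.mul_apply] at hj
      have hk : ∃ k, 0 < (P ^ n) i k * P k j := by
        by_contra! hc
        have h := Finset.sum_nonpos (s := Finset.univ) (fun k _ => hc k)
        linarith
      obtain ⟨k, hk⟩ := hk
      have h1 : 0 < (P ^ n) i k := pos_of_mul_pos_left hk (hPnn k j)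
      have h2 : 0 < P k j := pos_of_mul_pos_right hk h1.le
      exact hstep k 0 j (ih k h1) (by simpa using h2)
  intro j
  obtain ⟨n, _, hn⟩ := hirr i j
  exact hreach n j hn
end

section
/- Assume P is irreducible (for all s,s' ∈ S there exists n ≥ 1 with (P^n)(s,s') > 0). Then any two nonempty sets C₁, C₂ ⊆ S × ℕ that are both closed for the belief kernel K have nonempty intersection; in particular there do not exist two disjoint nonempty closed sets for K. -/
open scoped BigOperators

theorem aux_rowsum {S : Type*} [Fintype S] [DecidableEq S]
    (P : Matrix S S ℝ) (hProw : ∀ s, ∑ s', P s s' = 1) (n : ℕ) :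
    ∀ s, ∑ j, (P ^ n) s j = 1 := by
  induction n with
  | zero => intro s; simp [Matrix.one_apply]
  | succ n ih =>
    intro s
    simp only [pow_succ, Matrix.mul_apply]
    rw [Finset.sum_comm]
    simp only [← Finset.mul_sum, hProw, mul_one]
    exact ih s

theorem aux_closed {S : Type*} [Fintype S] [DecidableEq S]
    (P : Matrix S S ℝ) (ρ : ℝ) (hρ0 : 0 < ρ)
    (hPnn : ∀ s s', 0 ≤ P s s') (hProw : ∀ s, ∑ s', P s s' = 1)
    (hirr : ∀ s s' : S, ∃ n : ℕ, 1 ≤ n ∧ 0 < (P ^ n) s s')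
    (C : Set (S × ℕ)) (hne : C.Nonempty)
    (hC : ∀ p ∈ C, ∀ q : S × ℕ, 0 < beliefK P ρ p q → q ∈ C) (j : S) :
    (j, 0) ∈ C := by
  have step : ∀ p ∈ C, ∀ k : S, 0 < (P ^ (p.2 + 1)) p.1 k → (k, 0) ∈ C := by
    intro p hp k hk
    apply hC p hp
    simpa [beliefK] using mul_pos hρ0 hk
  have reach : ∀ n : ℕ, ∀ i k : S, (i, 0) ∈ C → 0 < (P ^ n) i k → (k, 0) ∈ C := by
    intro n
    induction n with
    | zero =>
      intro i k hi h
      by_cases e : i = k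
      · exact e ▸ hi
      · simp [Matrix.one_apply, e] at h
    | succ n ih =>
      intro i k hi h
      rw [pow_succ, Matrix.mul_apply] at h
      obtain ⟨l, -, hl⟩ := Finset.exists_lt_of_sum_lt
        (s := Finset.univ) (f := fun _ : S => (0 : ℝ)) (by simpa using h)
      have hlk : 0 < P l k := by
        rcases (hPnn l k).lt_or_eq with h' | h'
        · exact h'
        · simp [← h'] at hl
      have hil : 0 < (P ^ n) i l := pos_of_mul_pos_left hl hlk.le
      exact step (l, 0) (ih i l hi hil) k (by simpa using hlk)
  obtain ⟨p, hp⟩ := hne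
  obtain ⟨l, -, hl⟩ := Finset.exists_lt_of_sum_lt
    (s := Finset.univ) (f := fun _ : S => (0 : ℝ)) (g := fun k => (P ^ (p.2 + 1)) p.1 k)
    (by rw [aux_rowsum P hProw]; simp)
  obtain ⟨n, -, hn⟩ := hirr l j
  exact reach n l j (step p hp l hl) hn

/-- If `P` is irreducible, then any two nonempty sets closed for the belief
kernel `K` have nonempty intersection; in particular there do not exist two
disjoint nonempty closed sets for `K`. -/
theorem stmt7 {S : Type*} [Fintype S] [DecidableEq S] [Nonempty S]
    (P : Matrix S S ℝ) (ρ : ℝ) (hρ0 : 0 < ρ) (hρ1 : ρ ≤ 1)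
    (hPnn : ∀ s s', 0 ≤ P s s') (hProw : ∀ s, ∑ s', P s s' = 1)
    (hirr : ∀ s s' : S, ∃ n : ℕ, 1 ≤ n ∧ 0 < (P ^ n) s s')
    (C₁ C₂ : Set (S × ℕ)) (hC₁ne : C₁.Nonempty) (hC₂ne : C₂.Nonempty)
    (hC₁closed : ∀ p ∈ C₁, ∀ q : S × ℕ, 0 < beliefK P ρ p q → q ∈ C₁)
    (hC₂closed : ∀ p ∈ C₂, ∀ q : S × ℕ, 0 < beliefK P ρ p q → q ∈ C₂) :
    (C₁ ∩ C₂).Nonempty := by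
  obtain ⟨s⟩ := ‹Nonempty S›
  exact ⟨(s, 0), aux_closed P ρ hρ0 hPnn hProw hirr C₁ hC₁ne hC₁closed s,
    aux_closed P ρ hρ0 hPnn hProw hirr C₂ hC₂ne hC₂closed s⟩
end

section
/- Assume ρ ∈ (0,1) and P is irreducible (for all s,s' ∈ S there exists n ≥ 1 with (P^n)(s,s') > 0). Then the belief Markov chain is irreducible: for all states p, q ∈ S × ℕ there exists m ≥ 1 with K^m(p,q) > 0. -/
open scoped BigOperators

theorem aux_pow_nonneg {S : Type*} [Fintype S] [DecidableEq S] (P : Matrix S S ℝ)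
    (hPnn : ∀ s s', 0 ≤ P s s') (n : ℕ) : ∀ s s', 0 ≤ (P ^ n) s s' := by
  induction n with
  | zero =>
    intro s s'
    rw [pow_zero, Matrix.one_apply]
    split_ifs <;> norm_num
  | succ n ih =>
    intro s s'
    rw [pow_succ, Matrix.mul_apply]
    exact Finset.sum_nonneg fun j _ => mul_nonneg (ih _ _) (hPnn _ _)

theorem aux_pow_pos {S : Type*} [Fintype S] [DecidableEq S] (P : Matrix S S ℝ)
    (hPnn : ∀ s s', 0 ≤ P s s') (hProw : ∀ s, ∑ s', P s s' = 1) (n : ℕ) (s : S) :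
    ∃ j, 0 < (P ^ n) s j := by
  induction n with
  | zero => exact ⟨s, by simp⟩
  | succ n ih =>
    obtain ⟨j, hj⟩ := ih
    obtain ⟨k, -, hk⟩ : ∃ k ∈ Finset.univ, 0 < P j k := by
      by_contra! hc
      have := Finset.sum_nonpos hc
      linarith [hProw j]
    refine ⟨k, ?_⟩
    rw [pow_succ, Matrix.mul_apply]
    exact Finset.sum_pos' (fun i _ => mul_nonneg (aux_pow_nonneg P hPnn n _ _) (hPnn _ _))
      ⟨j, Finset.mem_univ _, mul_pos hj hk⟩

theorem aux_K_nonneg {S : Type*} [Fintype S] [DecidableEq S] (P : Matrix S S ℝ) (ρ : ℝ)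
    (hρ0 : 0 < ρ) (hρ1 : ρ < 1) (hPnn : ∀ s s', 0 ≤ P s s') (p q : S × ℕ) :
    0 ≤ beliefK P ρ p q := by
  unfold beliefK
  split_ifs
  · linarith
  · exact mul_nonneg hρ0.le (aux_pow_nonneg P hPnn _ _ _)
  · exact le_rfl

theorem aux_K_supp {S : Type*} [Fintype S] [DecidableEq S] (P : Matrix S S ℝ) (ρ : ℝ)
    (p q : S × ℕ) (h : p.2 + 1 < q.2) : beliefK P ρ p q = 0 := by
  unfold beliefK
  rw [if_neg (by omega), if_neg (by omega)]

theorem aux_iter_nonneg {X : Type*} (K : X → X → ℝ) (hK : ∀ p q, 0 ≤ K p q) (n : ℕ) :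
    ∀ p q, 0 ≤ kIter K n p q := by
  induction n with
  | zero => exact hK
  | succ n ih => exact fun p q => tsum_nonneg fun r => mul_nonneg (ih _ _) (hK _ _)

theorem aux_iter_supp {S : Type*} [Fintype S] [DecidableEq S] (P : Matrix S S ℝ) (ρ : ℝ)
    (n : ℕ) : ∀ p q : S × ℕ, p.2 + n + 1 < q.2 → kIter (beliefK P ρ) n p q = 0 := by
  induction n with
  | zero => exact fun p q h => aux_K_supp P ρ p q (by omega)
  | succ n ih =>
    intro p q h
    have h0 : ∀ r, kIter (beliefK P ρ) n p r * beliefK P ρ r q = 0 := by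
      intro r
      by_cases hr : p.2 + n + 1 < r.2
      · rw [ih p r hr, zero_mul]
      · rw [aux_K_supp P ρ r q (by omega), mul_zero]
    simp only [kIter, h0, tsum_zero]

theorem aux_step {S : Type*} [Fintype S] [DecidableEq S] (P : Matrix S S ℝ) (ρ : ℝ)
    (hρ0 : 0 < ρ) (hρ1 : ρ < 1) (hPnn : ∀ s s', 0 ≤ P s s') (p r q : S × ℕ)
    (h : ∃ m, 0 < kIter (beliefK P ρ) m p r) (hK : 0 < beliefK P ρ r q) :
    ∃ m, 0 < kIter (beliefK P ρ) m p q := by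
  obtain ⟨m, hm⟩ := h
  refine ⟨m + 1, ?_⟩
  have hKn := aux_K_nonneg P ρ hρ0 hρ1 hPnn
  have hs : Summable fun r => kIter (beliefK P ρ) m p r * beliefK P ρ r q := by
    apply summable_of_ne_finset_zero (s := Finset.univ ×ˢ Finset.range (p.2 + m + 2))
    intro b hb
    rw [aux_iter_supp P ρ m p b, zero_mul]
    simp at hb
    omega
  exact hs.tsum_pos (fun b => mul_nonneg (aux_iter_nonneg _ hKn m _ _) (hKn _ _)) r
    (mul_pos hm hK)

theorem aux_age {S : Type*} [Fintype S] [DecidableEq S] (P : Matrix S S ℝ) (ρ : ℝ)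
    (hρ0 : 0 < ρ) (hρ1 : ρ < 1) (hPnn : ∀ s s', 0 ≤ P s s') (p : S × ℕ) (s : S)
    (h : ∃ m, 0 < kIter (beliefK P ρ) m p (s, 0)) (k : ℕ) :
    ∃ m, 0 < kIter (beliefK P ρ) m p (s, k) := by
  induction k with
  | zero => exact h
  | succ k ih =>
    refine aux_step P ρ hρ0 hρ1 hPnn p (s, k) _ ih ?_
    simp [beliefK, hρ1]

theorem aux_obs {S : Type*} [Fintype S] [DecidableEq S] (P : Matrix S S ℝ) (ρ : ℝ)
    (hρ0 : 0 < ρ) (p : S × ℕ) (j : S) (h : 0 < (P ^ (p.2 + 1)) p.1 j) :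
    0 < beliefK P ρ p (j, 0) := by
  unfold beliefK
  rw [if_neg (by simp), if_pos rfl]
  exact mul_pos hρ0 h

/-- The belief chain is irreducible: for all states p, q there is n ≥ 1
(here n = m + 1, so that `kIter (beliefK P ρ) m` is the n-step kernel K^n)
with K^n(p,q) > 0. -/
theorem stmt8 {S : Type*} [Fintype S] [DecidableEq S] [Nonempty S]
    (P : Matrix S S ℝ) (ρ : ℝ) (hρ0 : 0 < ρ) (hρ1 : ρ < 1)
    (hPnn : ∀ s s', 0 ≤ P s s') (hProw : ∀ s, ∑ s', P s s' = 1)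
    (hirr : ∀ s s' : S, ∃ n : ℕ, 1 ≤ n ∧ 0 < (P ^ n) s s') :
    ∀ p q : S × ℕ, ∃ m : ℕ, 0 < kIter (beliefK P ρ) m p q := by
  intro p q
  obtain ⟨j, hj⟩ := aux_pow_pos P hPnn hProw (p.2 + 1) p.1
  obtain ⟨n, hn, hn'⟩ := hirr j q.1
  have h1 := aux_age P ρ hρ0 hρ1 hPnn p j ⟨0, aux_obs P ρ hρ0 p j hj⟩ (n - 1)
  refine aux_age P ρ hρ0 hρ1 hPnn p q.1 ?_ q.2
  refine aux_step P ρ hρ0 hρ1 hPnn p _ _ h1 (aux_obs P ρ hρ0 _ _ ?_)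
  simpa [Nat.sub_add_cancel hn] using hn'
end

section
/- Assume ρ ∈ (0,1], γ is a stationary distribution of P (γ ≥ 0, Σ_s γ(s) = 1, Σ_s γ(s)·P(s,s') = γ(s') for all s'), and every w : S → ℝ with w ≥ 0, Σ_s w(s) = 1 and Σ_s w(s)·M(s,s') = w(s') for all s' satisfies w = γ. Then every stationary probability distribution of the belief chain equals ν: if x : S × ℕ → ℝ is nonnegative, summable, with Σ_{(s,η)} x(s,η) = 1 and x(q) = Σ_p x(p)·K(p,q) for all q, then x(s,η) = γ(s)·ρ·(1-ρ)^η for all (s,η). -/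
open scoped BigOperators

/-- If `γ` is a stationary distribution of `P` and the only stationary
distribution of `M` is `γ`, then the unique stationary probability distribution
of the belief chain is `ν(s,η) = γ(s)·ρ·(1-ρ)^η`. -/
theorem stmt11 {S : Type*} [Fintype S] [DecidableEq S] [Nonempty S]
    (P : Matrix S S ℝ) (ρ : ℝ) (hρ0 : 0 < ρ) (hρ1 : ρ ≤ 1)
    (hPnn : ∀ s s', 0 ≤ P s s') (hProw : ∀ s, ∑ s', P s s' = 1)
    (γ : S → ℝ) (hγnn : ∀ s, 0 ≤ γ s) (hγsum : ∑ s, γ s = 1)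
    (hγstat : ∀ s', ∑ s, γ s * P s s' = γ s')
    (huniq : ∀ w : S → ℝ, (∀ s, 0 ≤ w s) → (∑ s, w s = 1) →
      (∀ s', ∑ s, w s * resolventM P ρ s s' = w s') → w = γ)
    (x : S × ℕ → ℝ) (hxnn : ∀ p, 0 ≤ x p) (hxsum : Summable x)
    (hx1 : ∑' p : S × ℕ, x p = 1)
    (hxstat : ∀ q : S × ℕ, x q = ∑' p : S × ℕ, x p * beliefK P ρ p q) :
    ∀ (s : S) (η : ℕ), x (s, η) = γ s * ρ * (1 - ρ) ^ η := by
  have hpow : ∀ n : ℕ, (∀ s s', 0 ≤ (P ^ n) s s') ∧ (∀ s, ∑ s', (P ^ n) s s' = 1) := by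
    intro n
    induction n with
    | zero =>
      refine ⟨fun s s' => ?_, fun s => ?_⟩
      · rw [pow_zero, Matrix.one_apply]
        split_ifs <;> norm_num
      · simp [Matrix.one_apply]
    | succ k ih =>
      refine ⟨fun s s' => ?_, fun s => ?_⟩
      · rw [pow_succ, Matrix.mul_apply]
        exact Finset.sum_nonneg fun j _ => mul_nonneg (ih.1 s j) (hPnn j s')
      · simp only [pow_succ, Matrix.mul_apply]
        rw [Finset.sum_comm]
        simp only [← Finset.mul_sum, hProw, mul_one]
        exact ih.2 s
  have hle : ∀ n s s', (P ^ n) s s' ≤ 1 := by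
    intro n s s'
    rw [← (hpow n).2 s]
    exact Finset.single_le_sum (f := fun j => (P ^ n) s j)
      (fun j _ => (hpow n).1 s j) (Finset.mem_univ s')
  have hstep : ∀ s η, x (s, η + 1) = x (s, η) * (1 - ρ) := by
    intro s η
    rw [hxstat (s, η + 1), tsum_eq_single (s, η)]
    · simp [beliefK]
    · rintro ⟨t, m⟩ hne
      have : ¬ (η + 1 = m + 1 ∧ s = t) := by
        rintro ⟨h1, h2⟩
        apply hne
        rw [h2, Nat.succ_injective h1]
      simp only [beliefK]
      rw [if_neg this, if_neg (Nat.succ_ne_zero η), mul_zero]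
  have hgeo : ∀ s η, x (s, η) = x (s, 0) * (1 - ρ) ^ η := by
    intro s η
    induction η with
    | zero => simp
    | succ k ih => rw [hstep, ih]; ring
  have hgs : HasSum (fun η : ℕ => (1 - ρ) ^ η) ρ⁻¹ := by
    have := hasSum_geometric_of_lt_one (r := 1 - ρ) (by linarith) (by linarith)
    simpa using this
  have hsum : ∑ s, x (s, 0) * ρ⁻¹ = 1 := by
    rw [← hx1, hxsum.tsum_prod, tsum_fintype]
    refine Finset.sum_congr rfl fun s _ => ?_
    rw [← hgs.tsum_eq, ← tsum_mul_left]
    exact tsum_congr fun η => (hgeo s η).symm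
  have h0 : ∀ j, x (j, 0) = ∑ s, x (s, 0) * resolventM P ρ s j := by
    intro j
    have hK : ∀ p : S × ℕ, x p * beliefK P ρ p (j, 0)
        = x p * (ρ * (P ^ (p.2 + 1)) p.1 j) := by
      intro p
      simp [beliefK]
    have hs : Summable fun p : S × ℕ => x p * (ρ * (P ^ (p.2 + 1)) p.1 j) := by
      refine Summable.of_nonneg_of_le (fun p => ?_) (fun p => ?_) hxsum
      · exact mul_nonneg (hxnn p) (mul_nonneg hρ0.le ((hpow _).1 _ _))
      · exact mul_le_of_le_one_right (hxnn p)
          (mul_le_one₀ hρ1 ((hpow _).1 _ _) (hle _ _ _))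
    rw [hxstat (j, 0), tsum_congr hK, hs.tsum_prod, tsum_fintype]
    refine Finset.sum_congr rfl fun s _ => ?_
    rw [resolventM, ← tsum_mul_left, ← tsum_mul_left]
    refine tsum_congr fun η => ?_
    rw [hgeo s η]
    ring
  have hw := huniq (fun s => x (s, 0) * ρ⁻¹)
    (fun s => mul_nonneg (hxnn _) (inv_nonneg.mpr hρ0.le)) hsum (by
      intro j
      rw [h0 j, Finset.sum_mul]
      exact Finset.sum_congr rfl fun s _ => by ring)
  intro s η
  rw [hgeo s η, ← hw]
  field_simp
end
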